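/- There exists a countable tree T of maximal degree 3 with infinitely many leaves such that for every finite set W of leaves of T, the tree T - W is isomorphic to T. -/

import Mathlib

open SimpleGraph Set

/-- A leaf of a graph: a vertex with exactly one neighbor (degree 1). -/
def IsLeaf {V : Type*} (G : SimpleGraph V) (x : V) : Prop :=
  (G.neighborSet x).encard = 1

/-- `v` is in the core `c(T)`: deleting `v` leaves at least two infinite components. -/
def InCore {V : Type*} (G : SimpleGraph V) (v : V) : Prop :=
  ∃ C D : (G.induce {u | u ≠ v}).ConnectedComponent,
    C ≠ D ∧ C.supp.Infinite ∧ D.supp.Infinite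

theorem SimpleGraph.isAcyclic_of_parent {V α : Type*} [LinearOrder α] {G : SimpleGraph V}
    (parent : V → V) (height : V → α)
    (h : ∀ u v, G.Adj u v →
      v = parent u ∧ height v < height u ∨ u = parent v ∧ height u < height v) :
    G.IsAcyclic := by
  classical
  intro v c hc
  obtain ⟨w, hw, hmax⟩ := c.support.toFinset.exists_max_image height ⟨v, by simp⟩
  rw [List.mem_toFinset] at hw
  have hc' := hc.rotate hw
  have key : ∀ x ∈ (c.rotate w hw).support, G.Adj w x → x = parent w := by
    intro x hx hadj
    rw [Walk.mem_support_rotate_iff] at hx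
    rcases h w x hadj with h1 | h1
    · exact h1.1
    · exact absurd (hmax x (List.mem_toFinset.2 hx)) (not_le.2 h1.2)
  refine hc'.snd_ne_penultimate ?_
  exact (key _ (Walk.getVert_mem_support _ _) (Walk.adj_snd hc'.not_nil)).trans
    (key _ (Walk.getVert_mem_support _ _) (Walk.adj_penultimate hc'.not_nil).symm).symm

/-- The left Cayley graph of the free group of countable rank with every vertex `g` expanded to
a ray `(g, 0), (g, 1), …`; the edge from `g` to `of n * g` joins `(g, 2 * n + 1)` to
`(of n * g, 2 * n + 2)`. -/
def rayCayleyGraph : SimpleGraph (FreeGroup ℕ × ℕ) :=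
  SimpleGraph.fromRel fun u v =>
    v = (u.1, u.2 + 1) ∨ ∃ n, u.2 = 2 * n + 1 ∧ v = (FreeGroup.of n * u.1, 2 * n + 2)

theorem rayCayleyGraph_adj {u v : FreeGroup ℕ × ℕ} :
    rayCayleyGraph.Adj u v ↔ u ≠ v ∧
      ((v = (u.1, u.2 + 1) ∨ ∃ n, u.2 = 2 * n + 1 ∧ v = (FreeGroup.of n * u.1, 2 * n + 2)) ∨
        u = (v.1, v.2 + 1) ∨ ∃ n, v.2 = 2 * n + 1 ∧ u = (FreeGroup.of n * v.1, 2 * n + 2)) :=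
  SimpleGraph.fromRel_adj _ _ _

theorem rayCayleyGraph_adj_succ (g : FreeGroup ℕ) (i : ℕ) :
    rayCayleyGraph.Adj (g, i) (g, i + 1) := by
  simp [rayCayleyGraph]

theorem rayCayleyGraph_adj_of_mul (g : FreeGroup ℕ) (n : ℕ) :
    rayCayleyGraph.Adj (g, 2 * n + 1) (FreeGroup.of n * g, 2 * n + 2) := by
  simp [rayCayleyGraph]

theorem rayCayleyGraph_adj_mul_right (h : FreeGroup ℕ) (u v : FreeGroup ℕ × ℕ) :
    rayCayleyGraph.Adj (u.1 * h, u.2) (v.1 * h, v.2) ↔ rayCayleyGraph.Adj u v := by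
  simp [rayCayleyGraph, Prod.ext_iff, ← mul_assoc]

theorem FreeGroup.toWord_of_mul_or {α : Type*} [DecidableEq α] (n : α) (g : FreeGroup α) :
    (of n * g).toWord = (n, true) :: g.toWord ∨ g.toWord = (n, false) :: (of n * g).toWord := by
  have h : (of n * g).toWord = reduce ((n, true) :: g.toWord) := by
    rw [toWord_mul, toWord_of]; rfl
  rw [reduce.cons, reduce_toWord] at h
  cases hg : g.toWord with
  | nil => simp [h, hg]
  | cons x L =>
    rw [hg] at h
    obtain ⟨m, b⟩ := x
    by_cases hc : n = m ∧ b = false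
    · obtain ⟨rfl, rfl⟩ := hc
      right; simp [h]
    · left
      simp only [h]
      rw [if_neg]
      simpa using hc

/-- The position at which the path from `(1, 0)` enters the ray of `g`, in terms of the reduced
word of `g`. -/
def rayEntry : List (ℕ × Bool) → ℕ
  | [] => 0
  | (n, true) :: _ => 2 * n + 2
  | (n, false) :: _ => 2 * n + 1

/-- The neighbour of the entry vertex of the ray of `g` towards `(1, 0)`. -/
def rayExit (g : FreeGroup ℕ) : List (ℕ × Bool) → FreeGroup ℕ × ℕ
  | [] => (g, 0)
  | (n, true) :: _ => ((FreeGroup.of n)⁻¹ * g, 2 * n + 1)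
  | (n, false) :: _ => (FreeGroup.of n * g, 2 * n + 2)

/-- The neighbour of a vertex on the path to `(1, 0)`. -/
def rayParent (v : FreeGroup ℕ × ℕ) : FreeGroup ℕ × ℕ :=
  if v.2 = rayEntry v.1.toWord then rayExit v.1 v.1.toWord
  else if rayEntry v.1.toWord < v.2 then (v.1, v.2 - 1) else (v.1, v.2 + 1)

/-- The length of the reduced word, then the distance to the entry vertex of the ray. -/
def rayHeight (v : FreeGroup ℕ × ℕ) : ℕ ×ₗ ℕ :=
  toLex (v.1.toWord.length, (v.2 - rayEntry v.1.toWord) + (rayEntry v.1.toWord - v.2))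

theorem rayCayleyGraph_isAcyclic : rayCayleyGraph.IsAcyclic := by
  have key : ∀ u v : FreeGroup ℕ × ℕ,
      (v = (u.1, u.2 + 1) ∨ ∃ n, u.2 = 2 * n + 1 ∧ v = (FreeGroup.of n * u.1, 2 * n + 2)) →
      v = rayParent u ∧ rayHeight v < rayHeight u ∨
        u = rayParent v ∧ rayHeight u < rayHeight v := by
    rintro ⟨g, i⟩ v (rfl | ⟨n, hi, rfl⟩)
    · simp only [rayParent, rayHeight, Prod.Lex.toLex_lt_toLex]
      rcases lt_or_ge i (rayEntry g.toWord) with h | h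
      · left
        rw [if_neg (by omega), if_neg (by omega)]
        exact ⟨rfl, by simp only [lt_irrefl, true_and, false_or]; omega⟩
      · right
        rw [if_neg (by omega), if_pos (by omega)]
        exact ⟨rfl, by simp only [lt_irrefl, true_and, false_or]; omega⟩
    · obtain rfl : i = 2 * n + 1 := hi
      simp only [rayParent, rayHeight, Prod.Lex.toLex_lt_toLex]
      rcases FreeGroup.toWord_of_mul_or n g with h | h
      · right
        rw [h]
        simp [rayEntry, rayExit]
      · left
        rw [h]
        simp [rayEntry, rayExit]
  refine isAcyclic_of_parent rayParent rayHeight fun u v huv => ?_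
  rcases rayCayleyGraph_adj.1 huv with ⟨-, h | h⟩
  · exact key u v h
  · exact (key v u h).symm

/-- The neighbour of a vertex of `rayCayleyGraph` outside its ray (junk on `(g, 0)`). -/
def rayPartner (v : FreeGroup ℕ × ℕ) : FreeGroup ℕ × ℕ :=
  if v.2 % 2 = 1 then (FreeGroup.of (v.2 / 2) * v.1, v.2 + 1)
  else ((FreeGroup.of (v.2 / 2 - 1))⁻¹ * v.1, v.2 - 1)

theorem rayCayleyGraph_neighborSet_subset (v : FreeGroup ℕ × ℕ) :
    rayCayleyGraph.neighborSet v ⊆ {(v.1, v.2 - 1), (v.1, v.2 + 1), rayPartner v} := by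
  obtain ⟨g, i⟩ := v
  rintro ⟨h, j⟩ hadj
  rcases rayCayleyGraph_adj.1 hadj with ⟨-, (h1 | ⟨n, hn, h1⟩) | h1 | ⟨n, hn, h1⟩⟩
  · simp [h1]
  · simp only at hn
    subst hn
    have : (2 * n + 1) / 2 = n := by omega
    simp [h1, rayPartner, Nat.add_mod, this]
  · simp only [Prod.mk.injEq] at h1
    simp [h1]
  · simp only [Prod.mk.injEq] at h1 hn
    obtain ⟨rfl, rfl⟩ := h1
    subst hn
    simp [rayPartner]

theorem rayCayleyGraph_adj_rayPartner (g : FreeGroup ℕ) (i : ℕ) :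
    rayCayleyGraph.Adj (g, i + 1) (rayPartner (g, i + 1)) := by
  rcases Nat.even_or_odd' i with ⟨n, rfl | rfl⟩
  · have h : (2 * n + 1) / 2 = n := by omega
    simpa [rayPartner, Nat.add_mod, h] using rayCayleyGraph_adj_of_mul g n
  · have h : (2 * n + 1 + 1) / 2 - 1 = n := by omega
    have h' : (2 * n + 1 + 1) % 2 = 0 := by omega
    simpa [rayPartner, h, h'] using (rayCayleyGraph_adj_of_mul ((FreeGroup.of n)⁻¹ * g) n).symm

theorem rayPartner_snd_pos (g : FreeGroup ℕ) (i : ℕ) : (rayPartner (g, i + 1)).2 ≠ 0 := by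
  unfold rayPartner
  split_ifs with h <;> simp only at h ⊢ <;> omega

theorem rayPartner_ne (g : FreeGroup ℕ) (i : ℕ) : rayPartner (g, i + 1) ≠ (g, i + 2) := by
  unfold rayPartner
  split_ifs with h
  · simp
  · simp only [ne_eq, Prod.mk.injEq, not_and]
    omega

/-- The vertices of `rayCayleyGraph` other than the leaves `(g, 0)` with `g ∉ R`. -/
def leafSelection (R : Set (FreeGroup ℕ)) : Set (FreeGroup ℕ × ℕ) := {v | v.2 = 0 → v.1 ∈ R}

theorem induce_leafSelection_connected (R : Set (FreeGroup ℕ)) :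
    (rayCayleyGraph.induce (leafSelection R)).Connected := by
  have mem : ∀ g i, (g, i + 1) ∈ leafSelection R := by simp [leafSelection]
  have ray : ∀ g i, (rayCayleyGraph.induce (leafSelection R)).Reachable
      ⟨(g, i + 1), mem g i⟩ ⟨(g, 1), mem g 0⟩ := by
    intro g i
    induction i with
    | zero => rfl
    | succ i ih =>
      refine .trans (Adj.reachable ?_) ih
      exact (rayCayleyGraph_adj_succ g (i + 1)).symm
  have step : ∀ n g, (rayCayleyGraph.induce (leafSelection R)).Reachable
      ⟨(FreeGroup.of n * g, 1), mem _ 0⟩ ⟨(g, 1), mem g 0⟩ := by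
    intro n g
    refine (ray _ (2 * n + 1)).symm.trans (.trans (Adj.reachable ?_) (ray g (2 * n)))
    exact (rayCayleyGraph_adj_of_mul g n).symm
  have word : ∀ w g, (rayCayleyGraph.induce (leafSelection R)).Reachable
      ⟨(w * g, 1), mem _ 0⟩ ⟨(g, 1), mem g 0⟩ := by
    intro w
    induction w using FreeGroup.induction_on with
    | C1 => intro g; simp
    | of n => exact step n
    | inv_of n _ =>
      intro g
      simpa using (step n ((FreeGroup.of n)⁻¹ * g)).symm
    | mul x y hx hy =>
      intro g
      have := (hx (y * g)).trans (hy g)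
      simpa only [mul_assoc] using this
  have base : ∀ v, (rayCayleyGraph.induce (leafSelection R)).Reachable v ⟨(1, 1), mem 1 0⟩ := by
    rintro ⟨⟨g, _ | i⟩, hv⟩
    · refine (Adj.reachable (v := ⟨(g, 1), mem g 0⟩) (rayCayleyGraph_adj_succ g 0)).trans ?_
      simpa using word g 1
    · refine (ray g i).trans ?_
      simpa using word g 1
  have : Nonempty (leafSelection R) := ⟨⟨(1, 1), mem 1 0⟩⟩
  exact ⟨fun u v => (base u).trans (base v).symm⟩

theorem induce_leafSelection_encard_neighborSet_le (R : Set (FreeGroup ℕ)) (v : leafSelection R) :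
    ((rayCayleyGraph.induce (leafSelection R)).neighborSet v).encard ≤ 3 := by
  rw [← Subtype.val_injective.encard_image]
  refine (Set.encard_le_encard ?_).trans
    ((Set.encard_le_encard (rayCayleyGraph_neighborSet_subset v)).trans ?_)
  · rintro _ ⟨w, hw, rfl⟩
    exact hw
  · refine (Set.encard_insert_le _ _).trans ?_
    refine (add_le_add_left (Set.encard_insert_le _ _) 1).trans ?_
    rw [Set.encard_singleton]
    norm_num

theorem isLeaf_induce_leafSelection_iff (R : Set (FreeGroup ℕ)) (v : leafSelection R) :
    IsLeaf (rayCayleyGraph.induce (leafSelection R)) v ↔ v.1.2 = 0 := by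
  obtain ⟨⟨g, _ | i⟩, hv⟩ := v
  · refine ⟨fun _ => rfl, fun _ => ?_⟩
    refine Set.encard_eq_one.2 ⟨⟨(g, 1), by simp [leafSelection]⟩, ?_⟩
    ext ⟨⟨h, j⟩, hw⟩
    simp only [mem_neighborSet, comap_adj, Function.Embedding.subtype_apply, mem_singleton_iff]
    refine ⟨fun hadj => ?_, fun h => ?_⟩
    · rcases rayCayleyGraph_adj.1 hadj with
        ⟨-, (h1 | ⟨n, hn, h1⟩) | h1 | ⟨n, hn, h1⟩⟩ <;> simp_all
    · have hv : (_, _) = (g, 1) := congrArg Subtype.val h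
      rw [hv]
      exact rayCayleyGraph_adj_succ g 0
  · refine ⟨fun h => ?_, fun h => by simp at h⟩
    have h1 := Set.one_lt_encard_iff.2 ⟨⟨(g, i + 2), by simp [leafSelection]⟩,
      ⟨rayPartner (g, i + 1), fun h => absurd h (rayPartner_snd_pos g i)⟩,
      (rayCayleyGraph_adj_succ g (i + 1) :
        _ ∈ (rayCayleyGraph.induce (leafSelection R)).neighborSet ⟨(g, i + 1), hv⟩),
      rayCayleyGraph_adj_rayPartner g i, fun h => rayPartner_ne g i (congrArg Subtype.val h).symm⟩
    exact absurd h h1.ne'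

/-- Right translation by `h` matches the selection of `R` with the selection of its translate. -/
theorem nonempty_iso_induce_leafSelection {R : Set (FreeGroup ℕ)} {W : Set (leafSelection R)}
    (hW : ∀ w ∈ W, w.1.2 = 0) {h : FreeGroup ℕ}
    (hh : ∀ g, g * h ∈ R \ (fun w => w.1.1) '' W ↔ g ∈ R) :
    Nonempty (rayCayleyGraph.induce (leafSelection R) ≃g
      (rayCayleyGraph.induce (leafSelection R)).induce {v | v ∉ W}) := by
  refine ⟨⟨⟨fun v => ⟨⟨(v.1.1 * h, v.1.2), fun h0 => ((hh _).2 (v.2 h0)).1⟩, fun hw => ?_⟩,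
    fun v => ⟨(v.1.1.1 * h⁻¹, v.1.1.2), fun h0 => (hh _).1 ?_⟩, fun v => ?_, fun v => ?_⟩, ?_⟩⟩
  · have h0 := hW _ hw
    exact ((hh _).2 (v.2 h0)).2 (mem_image_of_mem _ hw)
  · rw [inv_mul_cancel_right]
    refine ⟨v.1.2 h0, ?_⟩
    rintro ⟨w, hw, hwv⟩
    refine v.2 ?_
    convert hw
    exact Subtype.ext (Prod.ext hwv.symm (h0.trans (hW w hw).symm))
  · simp
  · simp
  · intro u v
    exact rayCayleyGraph_adj_mul_right h u.1 v.1

/-- Right translation by the generator `n`, composed with the flip of the label of `e n`. -/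
def labelPerm (e : ℕ → FreeGroup ℕ) (n : ℕ) : Equiv.Perm (FreeGroup ℕ × Bool) :=
  ((Equiv.mulRight (FreeGroup.of n)).prodCongr (Equiv.refl Bool)).trans
    (Equiv.swap (e n, true) (e n, false))

theorem labelPerm_apply (e : ℕ → FreeGroup ℕ) (n : ℕ) (g : FreeGroup ℕ) (b : Bool) :
    labelPerm e n (g, b) = (g * FreeGroup.of n, b ^^ decide (g * FreeGroup.of n = e n)) := by
  by_cases h : g * FreeGroup.of n = e n
  · cases b <;> simp [labelPerm, h]
  · simp [labelPerm, h, Equiv.swap_apply_of_ne_of_ne]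

theorem exists_set_mul_of_mem_iff (e : ℕ → FreeGroup ℕ) :
    ∃ R : Set (FreeGroup ℕ), ∀ n g,
      g * FreeGroup.of n ∈ R ↔ Xor (g ∈ R) (g * FreeGroup.of n = e n) := by
  let Φ : FreeGroup ℕ →* Equiv.Perm (FreeGroup ℕ × Bool) :=
    FreeGroup.lift fun n => (labelPerm e n)⁻¹
  have step : ∀ n g x, Φ (g * FreeGroup.of n)⁻¹ x = labelPerm e n (Φ g⁻¹ x) := by
    intro n g x
    simp [Φ, mul_inv_rev, map_mul]
  have fst : ∀ w x, (Φ w⁻¹ x).1 = x.1 * w := by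
    intro w
    induction w using FreeGroup.induction_on with
    | C1 => simp
    | of n =>
      intro x
      have := step n 1 x
      rw [one_mul] at this
      rw [this, inv_one, map_one, Equiv.Perm.one_apply, labelPerm_apply]
    | inv_of n _ =>
      intro x
      have h := step n (FreeGroup.of n)⁻¹ x
      rw [inv_mul_cancel, inv_one, map_one, Equiv.Perm.one_apply] at h
      generalize Φ (FreeGroup.of n)⁻¹⁻¹ x = y at h ⊢
      rw [h, labelPerm_apply]
      simp
    | mul u w hu hw =>
      intro x
      rw [mul_inv_rev, map_mul, Equiv.Perm.mul_apply, hw, hu, mul_assoc]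
  refine ⟨{g | (Φ g⁻¹ (1, false)).2 = true}, fun n g => ?_⟩
  have hg : Φ g⁻¹ (1, false) = (g, (Φ g⁻¹ (1, false)).2) :=
    Prod.ext (by rw [fst, one_mul]) rfl
  simp only [mem_ofPred_eq]
  rw [step, hg, labelPerm_apply]
  generalize (Φ g⁻¹ (1, false)).2 = b
  cases b <;> simp [Xor]

/-- There is an infinite set of free group elements such that removing any finite part of it
amounts to a right translation. -/
theorem exists_infinite_set_translate_eq_diff :
    ∃ R : Set (FreeGroup ℕ), R.Infinite ∧
      ∀ W : Set (FreeGroup ℕ), W.Finite → ∃ h, ∀ g, g * h ∈ R \ W ↔ g ∈ R := by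
  obtain ⟨e, he⟩ := exists_surjective_nat (FreeGroup ℕ)
  obtain ⟨R, hR⟩ := exists_set_mul_of_mem_iff e
  refine ⟨R, fun hfin => ?_, fun W hW => ?_⟩
  · obtain ⟨a, ha⟩ := hfin.exists_notMem
    obtain ⟨n, rfl⟩ := he a
    have himg : (· * FreeGroup.of n) '' R = insert (e n) R := by
      ext y
      have := hR n (y * (FreeGroup.of n)⁻¹)
      rw [inv_mul_cancel_right] at this
      rw [Set.image_mul_right, mem_preimage, mem_insert_iff]
      by_cases hy : y = e n
      · subst hy
        simp_all [Xor]
      · simp_all [Xor]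
    have hcard := Set.ncard_image_of_injective R (mul_left_injective (FreeGroup.of n))
    rw [himg, Set.ncard_insert_of_notMem ha hfin] at hcard
    omega
  · induction W, hW using Set.Finite.induction_on with
    | empty => exact ⟨1, by simp⟩
    | @insert a W ha hW ih =>
      obtain ⟨h, hh⟩ := ih
      by_cases haR : a ∈ R
      · obtain ⟨n, hn⟩ := he (a * h⁻¹)
        have hen : e n ∈ R := by
          rw [← hh, hn, inv_mul_cancel_right]
          exact ⟨haR, ha⟩
        refine ⟨FreeGroup.of n * h, fun g => ?_⟩
        have h1 := hh (g * FreeGroup.of n)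
        have h2 := hR n g
        have h3 : g * FreeGroup.of n = e n ↔ g * (FreeGroup.of n * h) = a := by
          rw [hn, eq_mul_inv_iff_mul_eq, mul_assoc]
        have h4 : g * FreeGroup.of n = e n → g * FreeGroup.of n ∈ R := fun h => h ▸ hen
        rw [mul_assoc] at h1
        simp only [mem_sdiff, mem_insert_iff, Xor] at *
        tauto
      · refine ⟨h, fun g => ?_⟩
        rw [← hh g]
        simp only [mem_sdiff, mem_insert_iff]
        have : g * h ∈ R → g * h ≠ a := fun h1 h2 => haR (h2 ▸ h1)
        tauto

theorem SimpleGraph.Iso.isLeaf_iff {V V' : Type*} {G : SimpleGraph V} {G' : SimpleGraph V'}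
    (φ : G ≃g G') (v : V) : IsLeaf G' (φ v) ↔ IsLeaf G v := by
  rw [IsLeaf, IsLeaf, Set.encard_congr (φ.mapNeighborSet v)]

/-- there is a countable tree of maximal degree 3 with infinitely
many leaves such that T ≅ T - W for every finite set W of leaves. -/
theorem stmt_10 :
    ∃ G : SimpleGraph ℕ, G.IsTree ∧ (∀ v, (G.neighborSet v).encard ≤ 3) ∧
      {x | IsLeaf G x}.Infinite ∧
      ∀ W : Set ℕ, W.Finite → (∀ w ∈ W, IsLeaf G w) →
        Nonempty (G ≃g G.induce {v | v ∉ W}) := by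
  obtain ⟨R, hinf, hR⟩ := exists_infinite_set_translate_eq_diff
  let T := rayCayleyGraph.induce (leafSelection R)
  have hleaves : {v | IsLeaf T v}.Infinite := by
    have := hinf.to_subtype
    refine Set.infinite_of_injective_forall_mem
      (f := fun g : R => (⟨(g.1, 0), fun _ => g.2⟩ : leafSelection R)) ?_ ?_
    · intro a b hab
      simpa [Subtype.ext_iff] using hab
    · intro g
      exact (isLeaf_induce_leafSelection_iff R _).2 rfl
  have : Infinite (leafSelection R) := ⟨fun h => hleaves (Set.toFinite _)⟩
  obtain ⟨f⟩ : Nonempty (leafSelection R ≃ ℕ) := nonempty_equiv_of_countable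
  let φ : T ≃g T.map f.toEmbedding := SimpleGraph.Iso.map f T
  have hleaf : ∀ x, IsLeaf (T.map f.toEmbedding) x ↔ IsLeaf T (φ.symm x) := fun x =>
    (φ.symm.isLeaf_iff x).symm
  refine ⟨T.map f.toEmbedding, φ.isTree_iff.1
    ⟨induce_leafSelection_connected R, rayCayleyGraph_isAcyclic.induce _⟩, fun v => ?_, ?_,
    fun W hW hWl => ?_⟩
  · rw [Set.encard_congr (φ.symm.mapNeighborSet v)]
    exact induce_leafSelection_encard_neighborSet_le R _
  · refine (hleaves.image φ.injective.injOn).mono ?_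
    rintro _ ⟨v, hv, rfl⟩
    exact (φ.isLeaf_iff v).2 hv
  · let W' : Set (leafSelection R) := φ ⁻¹' W
    have hW' : W'.Finite := hW.preimage φ.injective.injOn
    obtain ⟨h, hh⟩ := hR _ (hW'.image fun w => w.1.1)
    obtain ⟨ψ⟩ := nonempty_iso_induce_leafSelection (W := W') (fun w hw =>
      (isLeaf_induce_leafSelection_iff R w).1 ((φ.isLeaf_iff w).1 (hWl _ hw))) hh
    refine ⟨φ.symm.trans (ψ.trans ⟨φ.toEquiv.subtypeEquiv fun v => Iff.rfl, ?_⟩)⟩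
    intro u v
    exact φ.map_adj_iff
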